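/- Fix R, n ∈ ℕ. For k ∈ ℕ and reals N, λ > 0, let E(k,N,λ) be the event that there are at least N subsets B ⊆ {1,…,k+R} with |B| = k such that M_{k+R}[{R+1,…,k+R}, B] is λ-heavy. Then for any k ∈ ℕ with k + R ≤ n and any reals 0 < δ < 1/2, K > 1, λ > 0, N > 0, there is a partition E(k,N,λ) = E'(k,N,λ) ∪ E''(k,N,λ) into two disjoint events, each determined by M_{k+R}, such that, with N⁺ = RN/(8K), N⁻ = RN/(8n), λ⁺ = K^{1/2−δ}λ: (1) for every outcome M of M_{k+R} satisfying E(k,N,λ), Pr(E(k+1,N⁻,λ) | M_{k+R} = M) ≥ 1 − 2e^{−R/8}; (2) for every outcome M' satisfying E'(k,N,λ), Pr(E(k+1,N⁺,λ) | M_{k+R} = M') ≥ 1/3; (3) for every outcome M'' satisfying E''(k,N,λ), Pr(E(k+1,N⁻,λ⁺) | M_{k+R} = M'') ≥ 1 − 4K^{−δ}. -/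

import Mathlib

/-!
Adding a new row of signs `x` to the matrix, the permanent on a set `C` of `k + 1` old columns
becomes `∑ c ∈ C, x_c * per (C \ {c})`, so only the off-diagonal part of the new row matters, and
its entries are independent uniform signs.

For part (1), fix a heavy `k`-set `B` and condition on the signs in `B`. Each of the `R`
extensions `B ∪ {b}` becomes heavy for at least one value of `x_b`, independently over `b`, so by
Hoeffding's inequality a quarter of the extensions are heavy except with probability `e^(-R/8)`.
By Markov's inequality, half of the heavy `B` have this property except with probability
`2e^(-R/8)`, and each `(k+1)`-set extends at most `k + 1 ≤ n` sets `B`.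

For parts (2) and (3), let `h C` be the number of heavy `k`-subsets of a `(k+1)`-set `C`. Double
counting gives `∑ h C = R * #H ≥ R * N`, where `H` is the family of heavy `k`-sets. The event `E'`
says that the sets with `h C ≤ K` contribute at least half of this sum; otherwise those with
`h C > K` do. In the first case each `C` with `h C ≥ 1` is heavy with probability at least `1/2`. In
the second, the Erdős–Littlewood–Offord inequality shows that `C` fails to be `K^(1/2-δ) λ`-heavy
with probability at most `2K^(-δ)`. Markov's inequality for the total weight of the failing sets
finishes both cases.
-/

open Finset

/-- The real number (`1` or `-1`) associated to a Boolean: a Rademacher value. -/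
noncomputable def rad (b : Bool) : ℝ := if b then 1 else -1

/-- The permanent of the submatrix of `M` with row set `A` and column set `B`,
defined as a sum over all bijections between `A` and `B` (it equals `0` if
`A.card ≠ B.card`). Since the permanent is invariant under row and column
permutations, this faithfully represents `per M[A,B]`. -/
noncomputable def permOn {m n : ℕ} (M : Matrix (Fin m) (Fin n) ℝ)
    (A : Finset (Fin m)) (B : Finset (Fin n)) : ℝ :=
  ∑ σ : {x // x ∈ A} ≃ {y // y ∈ B}, ∏ i : {x // x ∈ A}, M i.1 (σ i).1

/-- The random symmetric extension of a fixed `n' × n'` matrix `M` to an `n × n` matrix: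
the top-left `n' × n'` block is `M`, and the remaining entries are Rademacher values
determined symmetrically by the Boolean data `ω`. As `ω` ranges uniformly over all Boolean
data, the new entries (on and above the diagonal) are i.i.d. Rademacher random variables. -/
noncomputable def extSym {n' : ℕ} (n : ℕ) (M : Matrix (Fin n') (Fin n') ℝ)
    (ω : Fin n → Fin n → Bool) : Matrix (Fin n) (Fin n) ℝ :=
  fun i j =>
    if h : (i : ℕ) < n' ∧ (j : ℕ) < n' then M ⟨i, h.1⟩ ⟨j, h.2⟩
    else if i ≤ j then rad (ω i j) else rad (ω j i)

open Classical in
/-- The probability of the event `P` for the random symmetric extension of `M` to size `n`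
(i.e. conditionally on the outcome `M` for the top-left block). -/
noncomputable def probExt {n' : ℕ} (n : ℕ) (M : Matrix (Fin n') (Fin n') ℝ)
    (P : Matrix (Fin n) (Fin n) ℝ → Prop) : ℝ :=
  ((univ.filter fun ω : Fin n → Fin n → Bool => P (extSym n M ω)).card : ℝ) / 2 ^ (n * n)

open Classical in
/-- The event `E(k, N, λ)`: there are at least `N` subsets `B` of size `k` such that the
submatrix of `M` with rows `{R+1, …, k+R}` and columns `B` is `λ`-heavy. (Stated for a
square matrix of any size `s`; in the statement below `s = k + R` or `s = (k+1) + R`.) -/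
def Ev (R k : ℕ) (N lam : ℝ) {s : ℕ} (M : Matrix (Fin s) (Fin s) ℝ) : Prop :=
  N ≤ ((univ.filter fun B : Finset (Fin s) => B.card = k ∧
    lam ≤ |permOn M (univ.filter fun i : Fin s => R ≤ (i : ℕ)) B|).card : ℝ)

open MeasureTheory ProbabilityTheory

/-! ### Expansion of the permanent along a row -/

section Permanent

lemma sum_prod_option_equiv {α β S : Type*} [Fintype α] [Fintype β] [DecidableEq α]
    [DecidableEq β] [CommSemiring S] (f : Option α → β → S) :
    ∑ σ : Option α ≃ β, ∏ i, f i (σ i) =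
      ∑ b, f none b * ∑ τ : α ≃ {y // y ≠ b}, ∏ a, f (some a) (τ a) := by
  rw [← (Equiv.sigmaFiberEquiv fun σ : Option α ≃ β => σ none).sum_comp, Fintype.sum_sigma]
  refine sum_congr rfl fun b _ => ?_
  rw [mul_sum]
  refine Fintype.sum_equiv (Equiv.optionSubtype b) _ _ fun ⟨σ, hσ⟩ => ?_
  simp [Fintype.prod_option, hσ]

lemma sum_prod_equiv_congr {α α' β β' S : Type*} [Fintype α] [Fintype α'] [Fintype β]
    [Fintype β'] [DecidableEq α] [DecidableEq α'] [DecidableEq β] [DecidableEq β']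
    [CommSemiring S] (e : α ≃ α') (e' : β ≃ β') (f : α' → β' → S) :
    ∑ σ : α' ≃ β', ∏ i, f i (σ i) = ∑ σ : α ≃ β, ∏ i, f (e i) (e' (σ i)) := by
  refine (Fintype.sum_equiv (e.equivCongr e') _ _ fun σ => ?_).symm
  exact Fintype.prod_equiv e _ _ fun i => by simp

variable {m n : ℕ}

lemma permOn_map {m' n' : ℕ} (M : Matrix (Fin m) (Fin n) ℝ) (f : Fin m' ↪ Fin m)
    (g : Fin n' ↪ Fin n) (A : Finset (Fin m')) (B : Finset (Fin n')) :
    permOn M (A.map f) (B.map g) = permOn (M.submatrix f g) A B :=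
  sum_prod_equiv_congr (A.equivMap f) (B.equivMap g) fun i j => M i.1 j.1

lemma permOn_insert (M : Matrix (Fin m) (Fin n) ℝ) {A : Finset (Fin m)} {r : Fin m}
    (hr : r ∉ A) (C : Finset (Fin n)) :
    permOn M (insert r A) C = ∑ c ∈ C, M r c * permOn M A (C.erase c) := by
  unfold permOn
  refine (sum_prod_equiv_congr (subtypeInsertEquivOption hr).symm (Equiv.refl {y // y ∈ C})
    fun i j => M i.1 j.1).trans <| (sum_prod_option_equiv fun i (j : {y // y ∈ C}) =>
      M ((subtypeInsertEquivOption hr).symm i).1 j.1).trans ?_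
  rw [← sum_coe_sort C]
  refine sum_congr rfl fun c _ => congrArg _ ?_
  let e : {y : {y // y ∈ C} // y ≠ c} ≃ {y // y ∈ C.erase c} :=
    { toFun := fun y => ⟨y.1, mem_erase.2 ⟨fun h => y.2 (Subtype.ext h), y.1.2⟩⟩
      invFun := fun y => ⟨⟨y, mem_of_mem_erase y.2⟩,
        fun h => ne_of_mem_erase y.2 (congrArg Subtype.val h)⟩
      left_inv := fun _ => rfl
      right_inv := fun _ => rfl }
  exact (sum_prod_equiv_congr (Equiv.refl {x // x ∈ A}) e fun i j => M i.1 j.1).symm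

end Permanent

/-! ### Uniform signs -/

section Uniform

variable {Ω Ω' : Type*} [MeasurableSpace Ω] [MeasurableSingletonClass Ω] [MeasurableSpace Ω']
  [MeasurableSingletonClass Ω']

lemma uniformOn_univ_real [Fintype Ω] (P : Ω → Prop) [DecidablePred P] :
    (uniformOn Set.univ).real {ω | P ω} = (#{ω | P ω} : ℝ) / Fintype.card Ω := by
  classical
  have h := uniformOn_apply_finset (s := univ) (t := {ω : Ω | P ω})
  rw [coe_univ, univ_inter, coe_filter_univ] at h
  simp [measureReal_def, h]

lemma measurePreserving_uniformOn_univ [Finite Ω] {f : Ω → Ω'} (hf : f.Bijective) :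
    MeasurePreserving f (uniformOn Set.univ) (uniformOn Set.univ) := by
  have : Finite Ω' := Finite.of_surjective f hf.2
  cases nonempty_fintype Ω
  cases nonempty_fintype Ω'
  refine ⟨.of_discrete, Measure.ext fun s _ => ?_⟩
  rw [Measure.map_apply .of_discrete .of_discrete, uniformOn_univ, uniformOn_univ,
    Fintype.card_of_bijective hf, Measure.count_apply .of_discrete,
    Measure.count_apply .of_discrete, Set.encard_preimage_of_bijective hf]

end Uniform

/-- The law of a family of independent uniform signs indexed by `V`. Signs are encoded as
Booleans; `rad` gives their real values. -/
noncomputable abbrev signMeasure (V : Type*) : Measure (V → Bool) := uniformOn Set.univ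

section Signs

variable {V : Type*}

lemma signMeasure_eq_pi [Fintype V] :
    signMeasure V = Measure.pi fun _ => uniformOn (Set.univ : Set Bool) := by
  rw [signMeasure, ← Set.pi_univ Set.univ, uniformOn_pi]

lemma sum_rad (D : Finset V) (x : V → Bool) :
    ∑ b ∈ D, rad (x b) = 2 * #{b ∈ D | x b = true} - (#D : ℝ) := by
  have h : ∀ b, rad (x b) = 2 * (if x b = true then 1 else 0) - 1 := fun b => by
    cases x b <;> norm_num [rad]
  simp only [h, sum_sub_distrib, ← mul_sum, sum_boole]
  simp

variable [Finite V]

lemma hasSubgaussianMGF_neg_rad (b : V) :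
    HasSubgaussianMGF (fun x : V → Bool => -rad (x b)) 1 (signMeasure V) := by
  cases nonempty_fintype V
  have hflip : MeasurePreserving (fun (x : V → Bool) c => !x c) (signMeasure V) (signMeasure V) :=
    measurePreserving_uniformOn_univ <| Function.Involutive.bijective fun x => by simp
  have hrad : ∀ s : Bool, -rad s ∈ Set.Icc (-1 : ℝ) 1 := by simp [rad]
  have hmean : ∫ x, -rad (x b) ∂signMeasure V = 0 := by
    have h := integral_map hflip.aemeasurable (f := fun x => -rad (x b))
      Measurable.of_discrete.aestronglyMeasurable
    have hnot : ∀ s, rad (!s) = -rad s := by simp [rad]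
    simp only [hflip.map_eq, hnot, integral_neg] at h
    rw [integral_neg]
    linarith
  have h := hasSubgaussianMGF_of_mem_Icc_of_integral_eq_zero Measurable.of_discrete.aemeasurable
    (.of_forall fun x : V → Bool => hrad (x b)) hmean
  have hone : (‖(1 : ℝ) - -1‖₊ / 2) ^ 2 = 1 := by norm_num
  rwa [hone] at h

lemma iIndepFun_neg_rad : iIndepFun (fun b (x : V → Bool) => -rad (x b)) (signMeasure V) := by
  cases nonempty_fintype V
  rw [signMeasure_eq_pi]
  exact iIndepFun_pi (X := fun _ s => -rad s) fun _ => Measurable.of_discrete.aemeasurable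

lemma measureReal_sum_rad_le_neg (D : Finset V) {ε : ℝ} (hε : 0 ≤ ε) :
    (signMeasure V).real {x | ∑ b ∈ D, rad (x b) ≤ -ε} ≤ Real.exp (-ε ^ 2 / (2 * #D)) := by
  have h := HasSubgaussianMGF.measure_sum_ge_le_of_iIndepFun iIndepFun_neg_rad (c := fun _ => 1)
    (s := D) (fun b _ => hasSubgaussianMGF_neg_rad b) hε
  simpa [le_neg] using h

lemma measureReal_card_filter_eq_true_lt_le (D : Finset V) :
    (signMeasure V).real {x | (#{b ∈ D | x b = true} : ℝ) < #D / 4} ≤ Real.exp (-#D / 8) := by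
  calc _ ≤ (signMeasure V).real {x | ∑ b ∈ D, rad (x b) ≤ -(#D / 2)} := by
        refine measureReal_mono (fun x hx => ?_) (measure_ne_top _ _)
        rw [Set.mem_ofPred_eq] at hx ⊢
        rw [sum_rad]
        linarith
    _ ≤ Real.exp (-(#D / 2) ^ 2 / (2 * #D)) := measureReal_sum_rad_le_neg D (by positivity)
    _ = Real.exp (-#D / 8) := by
        congr 1
        rcases eq_or_ne (#D : ℝ) 0 with h | h
        · simp [h]
        · field_simp
          norm_num

end Signs

/-! ### The Littlewood–Offord inequality -/

section LittlewoodOfford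

lemma card_filter_sum_mem_Ico_le {α : Type*} [Fintype α] {a : α → ℝ} {δ : ℝ} (hδ : 0 < δ)
    (ha : ∀ b, δ ≤ a b) (m : ℝ) :
    #{A : Finset α | ∑ b ∈ A, a b ∈ Set.Ico m (m + δ)} ≤
      (Fintype.card α).choose (Fintype.card α / 2) := by
  classical
  refine IsAntichain.sperner fun A hA B hB hne hAB => ?_
  obtain ⟨b, hbB, hbA⟩ := exists_of_ssubset (hAB.ssubset_of_ne hne)
  have hle : ∑ i ∈ insert b A, a i ≤ ∑ i ∈ B, a i :=
    sum_le_sum_of_subset_of_nonneg (insert_subset hbB hAB) fun i _ _ => hδ.le.trans (ha i)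
  rw [sum_insert hbA] at hle
  have hAm := (mem_filter.1 hA).2.1
  have hBm := (mem_filter.1 hB).2.2
  linarith [ha b]

lemma card_filter_sum_rad_mem_Ico_le {α : Type*} [Fintype α] [DecidableEq α] {a : α → ℝ} {lam : ℝ}
    (ha : ∀ b, lam ≤ |a b|) (m : ℝ) :
    #{x : α → Bool | ∑ b, rad (x b) * a b ∈ Set.Ico m (m + 2 * lam)} ≤
      (Fintype.card α).choose (Fintype.card α / 2) := by
  rcases le_or_gt lam 0 with hlam | hlam
  · simp [Set.Ico_eq_empty (show ¬ m < m + 2 * lam by linarith)]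
  let agree : (α → Bool) → Finset α := fun x => {b | x b = decide (0 ≤ a b)}
  have hsum (x : α → Bool) :
      ∑ b, rad (x b) * a b = 2 * ∑ b ∈ agree x, |a b| - ∑ b, |a b| := by
    rw [sum_filter, mul_sum, ← sum_sub_distrib]
    refine sum_congr rfl fun b _ => ?_
    rcases le_or_gt 0 (a b) with h | h
    · rw [abs_of_nonneg h, decide_eq_true h]
      cases x b <;> norm_num [rad, two_mul]
    · rw [abs_of_neg h, decide_eq_false h.not_ge]
      cases x b <;> norm_num [rad, two_mul]
  have hinj : agree.Injective := fun x y h => funext fun b => by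
    have hb := Finset.ext_iff.1 h b
    simp only [agree, mem_filter_univ] at hb
    cases hx : x b <;> cases hy : y b <;> grind
  refine (card_le_card_of_injOn agree (fun x hx => ?_) hinj.injOn).trans
    (card_filter_sum_mem_Ico_le hlam ha ((m + ∑ b, |a b|) / 2))
  simp only [mem_coe, mem_filter_univ, Set.mem_Ico, hsum] at hx ⊢
  constructor <;> linarith

lemma centralBinom_sq_mul_le (m : ℕ) : m.centralBinom ^ 2 * (2 * m + 1) ≤ 16 ^ m := by
  induction m with
  | zero => simp
  | succ m ih =>
    refine le_of_mul_le_mul_left ?_ (by positivity : 0 < (m + 1) ^ 2)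
    calc (m + 1) ^ 2 * ((m + 1).centralBinom ^ 2 * (2 * (m + 1) + 1))
        = ((m + 1) * (m + 1).centralBinom) ^ 2 * (2 * m + 3) := by ring
      _ = (m.centralBinom ^ 2 * (2 * m + 1)) * (4 * ((2 * m + 1) * (2 * m + 3))) := by
        rw [Nat.succ_mul_centralBinom_succ]; ring
      _ ≤ 16 ^ m * (4 * (4 * (m + 1) ^ 2)) := Nat.mul_le_mul ih (by nlinarith)
      _ = (m + 1) ^ 2 * 16 ^ (m + 1) := by ring

lemma choose_half_sq_mul_le (m : ℕ) : m.choose (m / 2) ^ 2 * m ≤ 4 ^ m := by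
  rcases Nat.even_or_odd' m with ⟨j, rfl | rfl⟩
  · have h := centralBinom_sq_mul_le j
    rw [Nat.centralBinom_eq_two_mul_choose] at h
    rw [Nat.mul_div_cancel_left _ two_pos, pow_mul]
    norm_num
    nlinarith
  · have h := centralBinom_sq_mul_le (j + 1)
    have hcentral : (j + 1).centralBinom = 2 * (2 * j + 1).choose j := by
      rw [Nat.centralBinom_eq_two_mul_choose, show 2 * (j + 1) = 2 * j + 1 + 1 by ring,
        Nat.choose_succ_succ, Nat.choose_symm_half]
      ring
    have hpow : (4 : ℕ) ^ (2 * j + 1) = 4 * 16 ^ j := by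
      rw [pow_succ, pow_mul]; norm_num [mul_comm]
    rw [hcentral, pow_succ 16] at h
    rw [show (2 * j + 1) / 2 = j by omega, hpow]
    nlinarith [Nat.zero_le ((2 * j + 1).choose j ^ 2)]

lemma choose_half_div_two_pow_le {m : ℕ} (hm : 0 < m) :
    (m.choose (m / 2) : ℝ) / 2 ^ m ≤ 1 / √m := by
  rw [div_le_div_iff₀ (by positivity) (by positivity), one_mul]
  refine (abs_le_of_sq_le_sq' ?_ (by positivity)).2
  rw [mul_pow, Real.sq_sqrt (by positivity), ← pow_mul, mul_comm m, pow_mul]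
  exact_mod_cast choose_half_sq_mul_le m

lemma exists_mem_Ico_of_abs_lt {lam t S : ℝ} (hlam : 0 < lam) (hS : |S| < t * lam) :
    ∃ j ∈ range ⌈t⌉₊,
      S ∈ Set.Ico (-(t * lam) + 2 * lam * j) (-(t * lam) + 2 * lam * j + 2 * lam) := by
  obtain ⟨hlo, hhi⟩ := abs_lt.1 hS
  have hq : 0 ≤ (S + t * lam) / (2 * lam) := div_nonneg (by linarith) (by linarith)
  have hfloor := Nat.floor_le hq
  have hlt := Nat.lt_floor_add_one ((S + t * lam) / (2 * lam))
  rw [le_div_iff₀ (by positivity)] at hfloor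
  rw [div_lt_iff₀ (by positivity)] at hlt
  refine ⟨⌊(S + t * lam) / (2 * lam)⌋₊, ?_, by linarith, by linarith⟩
  rw [mem_range, Nat.floor_lt hq, div_lt_iff₀ (by positivity)]
  nlinarith [Nat.le_ceil t]

variable {V : Type*} {a : V → ℝ} {C U : Finset V} {lam : ℝ}

lemma card_filter_sum_rad_mem_Ico_le_of_subset [Fintype V] [DecidableEq V] (hU : U ⊆ C)
    (ha : ∀ b ∈ U, lam ≤ |a b|) (m : ℝ) :
    #{x : V → Bool | ∑ c ∈ C, rad (x c) * a c ∈ Set.Ico m (m + 2 * lam)} ≤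
      (#U).choose (#U / 2) * 2 ^ #Uᶜ := by
  let rest : (V → Bool) → {c // c ∈ Uᶜ} → Bool := fun x c => x c
  refine (card_le_mul_card_image (f := rest) _ _ fun z hz => ?_).trans
    (Nat.mul_le_mul_left _ ((card_le_univ _).trans_eq (by simp [card_compl])))
  obtain ⟨x₀, -, rfl⟩ := mem_image.1 hz
  have hrest {x : V → Bool} (hx : rest x = rest x₀) {c : V} (hc : c ∉ U) : x c = x₀ c :=
    congrFun hx ⟨c, mem_compl.2 hc⟩
  let fixed := ∑ c ∈ C \ U, rad (x₀ c) * a c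
  have hsplit {x : V → Bool} (hx : rest x = rest x₀) :
      ∑ c ∈ C, rad (x c) * a c = fixed + ∑ c : U, rad (x c) * a c := by
    rw [← sum_sdiff hU, sum_coe_sort U fun c => rad (x c) * a c]
    exact congrArg (· + _) <| sum_congr rfl fun c hc => by rw [hrest hx (mem_sdiff.1 hc).2]
  have hLO := card_filter_sum_rad_mem_Ico_le (fun b : U => ha b b.2) (m - fixed)
  rw [Fintype.card_coe] at hLO
  refine (card_le_card_of_injOn (fun x (c : U) => x c) (fun x hx => ?_) ?_).trans hLO
  · simp only [mem_coe, mem_filter, mem_univ, true_and, Set.mem_Ico] at hx ⊢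
    rw [hsplit hx.2] at hx
    constructor <;> linarith
  · intro x hx y hy h
    funext c
    by_cases hc : c ∈ U
    · exact congrFun h ⟨c, hc⟩
    · rw [hrest (mem_filter.1 hx).2 hc, hrest (mem_filter.1 hy).2 hc]

variable [Finite V]

theorem measureReal_sum_rad_mem_Ico_le (hU : U ⊆ C) (ha : ∀ b ∈ U, lam ≤ |a b|) (m : ℝ) :
    (signMeasure V).real {x | ∑ c ∈ C, rad (x c) * a c ∈ Set.Ico m (m + 2 * lam)} ≤
      (#U).choose (#U / 2) / 2 ^ #U := by
  classical
  cases nonempty_fintype V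
  rw [uniformOn_univ_real, div_le_div_iff₀ (by positivity) (by positivity)]
  have h := Nat.mul_le_mul_right (2 ^ #U)
    (card_filter_sum_rad_mem_Ico_le_of_subset hU ha m)
  rw [mul_assoc, ← pow_add, card_compl_add_card] at h
  simpa using mod_cast h

lemma measureReal_abs_sum_rad_lt_le_half {b : V} (hb : b ∈ C) (ha : lam ≤ |a b|) :
    (signMeasure V).real {x | ¬ lam ≤ |∑ c ∈ C, rad (x c) * a c|} ≤ 1 / 2 := by
  have h := measureReal_sum_rad_mem_Ico_le (U := {b}) (singleton_subset_iff.2 hb)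
    (by simpa using ha) (-lam)
  refine (measureReal_mono fun x hx => ?_).trans (h.trans_eq (by simp))
  obtain ⟨hlo, hhi⟩ := abs_lt.1 (not_le.1 hx)
  exact ⟨hlo.le, by linarith⟩

theorem measureReal_abs_sum_rad_lt_le {t : ℝ} (ht : 1 ≤ t) (hU : U ⊆ C) (hne : U.Nonempty)
    (ha : ∀ b ∈ U, lam ≤ |a b|) :
    (signMeasure V).real {x | ¬ t * lam ≤ |∑ c ∈ C, rad (x c) * a c|} ≤ 2 * t / √(#U) := by
  rcases le_or_gt lam 0 with hlam | hlam
  · have h (x : V → Bool) : t * lam ≤ |∑ c ∈ C, rad (x c) * a c| :=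
      (mul_nonpos_of_nonneg_of_nonpos (by linarith) hlam).trans (abs_nonneg _)
    simp only [h, not_true_eq_false, Set.ofPred_false, measureReal_empty]
    positivity
  let I (j : ℕ) : Set (V → Bool) := {x | ∑ c ∈ C, rad (x c) * a c ∈
    Set.Ico (-(t * lam) + 2 * lam * j) (-(t * lam) + 2 * lam * j + 2 * lam)}
  have hI (j : ℕ) : (signMeasure V).real (I j) ≤ 1 / √(#U) :=
    (measureReal_sum_rad_mem_Ico_le hU ha _).trans (choose_half_div_two_pow_le hne.card_pos)
  have hcover : {x : V → Bool | ¬ t * lam ≤ |∑ c ∈ C, rad (x c) * a c|} ⊆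
      ⋃ j ∈ range ⌈t⌉₊, I j := fun x hx => by
    obtain ⟨j, hj, hmem⟩ := exists_mem_Ico_of_abs_lt hlam (not_le.1 hx)
    exact Set.mem_biUnion hj hmem
  calc (signMeasure V).real {x | ¬ t * lam ≤ |∑ c ∈ C, rad (x c) * a c|}
      ≤ (signMeasure V).real (⋃ j ∈ range ⌈t⌉₊, I j) :=
        measureReal_mono hcover (measure_ne_top _ _)
    _ ≤ ∑ j ∈ range ⌈t⌉₊, (signMeasure V).real (I j) := measureReal_biUnion_finset_le _ _
    _ ≤ ∑ j ∈ range ⌈t⌉₊, 1 / √(#U) := sum_le_sum fun j _ => hI j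
    _ = ⌈t⌉₊ / √(#U) := by rw [sum_const, card_range, nsmul_eq_mul, mul_one_div]
    _ ≤ 2 * t / √(#U) := by
      gcongr
      linarith [Nat.ceil_lt_add_one (zero_le_one.trans ht)]

end LittlewoodOfford

/-! ### Markov's inequality for weighted counts -/

section Markov

variable {Ω ι : Type*} [MeasurableSpace Ω] {μ : Measure Ω} [IsProbabilityMeasure μ]
  {𝒞 : Finset ι} {w : ι → ℝ} {G : Ω → ι → Prop} {ρ θ : ℝ}

lemma mul_measureReal_weight_failing_le [∀ x, DecidablePred (G x)] (hw : ∀ C ∈ 𝒞, 0 ≤ w C)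
    (hG : ∀ C ∈ 𝒞, MeasurableSet {x | G x C})
    (hρ : ∀ C ∈ 𝒞, w C ≠ 0 → μ.real {x | ¬ G x C} ≤ ρ) (ε : ℝ) :
    ε * μ.real {x | ε ≤ ∑ C ∈ 𝒞 with ¬ G x C, w C} ≤ ρ * ∑ C ∈ 𝒞, w C := by
  classical
  let f (x : Ω) (C : ι) : ℝ := {x | ¬ G x C}.indicator (fun _ => w C) x
  have hf (x : Ω) : ∑ C ∈ 𝒞 with ¬ G x C, w C = ∑ C ∈ 𝒞, f x C := by
    simp [f, sum_filter, Set.indicator_apply]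
  have hint (C : ι) (hC : C ∈ 𝒞) : Integrable (f · C) μ :=
    (integrable_const _).indicator (hG C hC).compl
  calc ε * μ.real {x | ε ≤ ∑ C ∈ 𝒞 with ¬ G x C, w C}
      ≤ ∫ x, ∑ C ∈ 𝒞, f x C ∂μ := by
        simp only [hf]
        refine mul_meas_ge_le_integral_of_nonneg (.of_forall fun x => ?_)
          (integrable_finsetSum _ hint) ε
        exact sum_nonneg fun C hC => Set.indicator_nonneg (fun _ _ => hw C hC) x
    _ = ∑ C ∈ 𝒞, μ.real {x | ¬ G x C} * w C := by
        rw [integral_finsetSum _ hint]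
        exact sum_congr rfl fun C hC => integral_indicator_const _ (hG C hC).compl
    _ ≤ ∑ C ∈ 𝒞, ρ * w C := by
        refine sum_le_sum fun C hC => ?_
        rcases eq_or_ne (w C) 0 with h | h
        · simp [h]
        · exact mul_le_mul_of_nonneg_right (hρ C hC h) (hw C hC)
    _ = ρ * ∑ C ∈ 𝒞, w C := (mul_sum _ _ _).symm

theorem one_sub_div_le_measureReal_weight [∀ x, DecidablePred (G x)] (hw : ∀ C ∈ 𝒞, 0 ≤ w C)
    (hG : ∀ C ∈ 𝒞, MeasurableSet {x | G x C}) (hρ0 : 0 ≤ ρ)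
    (hρ : ∀ C ∈ 𝒞, w C ≠ 0 → μ.real {x | ¬ G x C} ≤ ρ) (hθ : 0 < θ) :
    1 - ρ / θ ≤ μ.real {x | (1 - θ) * ∑ C ∈ 𝒞, w C ≤ ∑ C ∈ 𝒞 with G x C, w C} := by
  set S := ∑ C ∈ 𝒞, w C with hS
  rcases (sum_nonneg hw).eq_or_lt with h0 | hpos
  · have h (x : Ω) : (1 - θ) * S ≤ ∑ C ∈ 𝒞 with G x C, w C := by
      rw [hS, ← h0, mul_zero]
      exact sum_nonneg fun C hC => hw C (mem_filter.1 hC).1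
    simpa [h] using div_nonneg hρ0 hθ.le
  have hbad : μ.real {x | θ * S ≤ ∑ C ∈ 𝒞 with ¬ G x C, w C} ≤ ρ / θ := by
    rw [le_div_iff₀' hθ]
    refine le_of_mul_le_mul_right ?_ hpos
    linarith [mul_measureReal_weight_failing_le hw hG hρ (θ * S)]
  have hcover : (Set.univ : Set Ω) ⊆ {x | (1 - θ) * S ≤ ∑ C ∈ 𝒞 with G x C, w C} ∪
      {x | θ * S ≤ ∑ C ∈ 𝒞 with ¬ G x C, w C} := fun x _ => by
    have hsplit := sum_filter_add_sum_filter_not 𝒞 (G x) w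
    rcases le_total (θ * S) (∑ C ∈ 𝒞 with ¬ G x C, w C) with h | h
    · exact .inr h
    · exact .inl (show (1 - θ) * S ≤ _ by linarith)
  have hone := (measureReal_mono (μ := μ) hcover).trans (measureReal_union_le _ _)
  rw [probReal_univ] at hone
  linarith

theorem one_sub_div_le_measureReal_card [∀ x, DecidablePred (G x)] {L : ℝ} (hL : 0 < L)
    (hw : ∀ C ∈ 𝒞, 0 ≤ w C) (hwL : ∀ C ∈ 𝒞, w C ≤ L)
    (hG : ∀ C ∈ 𝒞, MeasurableSet {x | G x C}) (hρ0 : 0 ≤ ρ)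
    (hρ : ∀ C ∈ 𝒞, w C ≠ 0 → μ.real {x | ¬ G x C} ≤ ρ) (hθ : 0 < θ) :
    1 - ρ / θ ≤ μ.real {x | (1 - θ) * (∑ C ∈ 𝒞, w C) / L ≤ #{C ∈ 𝒞 | G x C}} := by
  refine (one_sub_div_le_measureReal_weight hw hG hρ0 hρ hθ).trans (measureReal_mono fun x hx => ?_)
  refine (div_le_iff₀ hL).2 (le_trans hx ?_)
  simpa using sum_le_card_nsmul _ _ _ fun C hC => hwL C (mem_filter.1 hC).1

end Markov

/-! ### Heavy sets of a random row extension -/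

section SetFunctions

variable {V : Type*}

/-- The sets of size `k` on which the set function `p` has absolute value at least `lam`. For
`p B` the permanent of a fixed set of rows restricted to the columns `B`, these are the column
sets of the `lam`-heavy submatrices. -/
noncomputable def heavySets [Fintype V] (p : Finset V → ℝ) (lam : ℝ) (k : ℕ) :
    Finset (Finset V) :=
  {B ∈ powersetCard k univ | lam ≤ |p B|}

lemma mem_heavySets [Fintype V] {p : Finset V → ℝ} {lam : ℝ} {k : ℕ} {B : Finset V} :
    B ∈ heavySets p lam k ↔ #B = k ∧ lam ≤ |p B| := by
  simp [heavySets]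

lemma heavySets_subset_powersetCard [Fintype V] (p : Finset V → ℝ) (lam : ℝ) (k : ℕ) :
    heavySets p lam k ⊆ powersetCard k univ :=
  filter_subset _ _

variable [DecidableEq V]

/-- If `p` gives the permanents of a set of rows, `rowExtend p x` gives, by expansion along the
last row, those of the same rows followed by the row of signs `x`. -/
noncomputable def rowExtend (p : Finset V → ℝ) (x : V → Bool) (C : Finset V) : ℝ :=
  ∑ c ∈ C, rad (x c) * p (C.erase c)

lemma rowExtend_insert (p : Finset V → ℝ) (x : V → Bool) {B : Finset V} {b : V} (hb : b ∉ B) :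
    rowExtend p x (insert b B) =
      rad (x b) * p B + ∑ c ∈ B, rad (x c) * p ((insert b B).erase c) := by
  rw [rowExtend, sum_insert hb, erase_insert hb]

/-- The elements of `C` whose removal gives a member of the family `𝒜`. -/
def erasuresIn (𝒜 : Finset (Finset V)) (C : Finset V) : Finset V := {c ∈ C | C.erase c ∈ 𝒜}

/-- The elements outside `B` whose addition gives a member of the family `ℬ`. -/
def extensionsIn [Fintype V] (ℬ : Finset (Finset V)) (B : Finset V) : Finset V :=
  {b ∈ Bᶜ | insert b B ∈ ℬ}

lemma card_erasuresIn_le (𝒜 : Finset (Finset V)) (C : Finset V) : #(erasuresIn 𝒜 C) ≤ #C :=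
  card_filter_le _ _

lemma bijective_beq_of_eqOn [Finite V] {B : Finset V} {e : (V → Bool) → V → Bool}
    (he : ∀ x y, (∀ c ∈ B, x c = y c) → e x = e y) :
    Function.Bijective fun (x : V → Bool) b => if b ∈ B then x b else x b == e x b := by
  refine Finite.injective_iff_bijective.1 fun x y h => ?_
  have hB : ∀ c ∈ B, x c = y c := fun c hc => by simpa [hc] using congrFun h c
  funext b
  by_cases hb : b ∈ B
  · exact hB b hb
  · have hb' : (x b == e x b) = (y b == e x b) := by
      simpa only [hb, if_false, he x y hB] using congrFun h b
    cases hx : x b <;> cases hy : y b <;> simp_all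

lemma abs_le_abs_rad_decide_mul_add (u v : ℝ) : |u| ≤ |rad (decide (0 ≤ u * v)) * u + v| := by
  rw [← sq_le_sq]
  rcases le_or_gt 0 (u * v) with h | h
  · simp only [h, decide_true, rad, if_true]
    nlinarith [sq_nonneg v]
  · simp only [h.not_ge, decide_false, rad, Bool.false_eq_true, if_false]
    nlinarith [sq_nonneg v]

variable [Fintype V]

lemma sum_card_extensionsIn_eq_sum_card_erasuresIn (𝒜 ℬ : Finset (Finset V)) :
    ∑ B ∈ 𝒜, #(extensionsIn ℬ B) = ∑ C ∈ ℬ, #(erasuresIn 𝒜 C) := by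
  rw [← card_sigma, ← card_sigma]
  refine card_nbij' (fun y => ⟨insert y.2 y.1, y.2⟩) (fun y => ⟨y.1.erase y.2, y.2⟩) ?_ ?_ ?_ ?_
  all_goals
    rintro ⟨A, b⟩ h
    simp_all [extensionsIn, erasuresIn]

lemma sum_card_erasuresIn_powersetCard {k : ℕ} {𝒜 : Finset (Finset V)}
    (h𝒜 : 𝒜 ⊆ powersetCard k univ) :
    ∑ C ∈ powersetCard (k + 1) univ, #(erasuresIn 𝒜 C) = (Fintype.card V - k) * #𝒜 := by
  rw [← sum_card_extensionsIn_eq_sum_card_erasuresIn, mul_comm, ← smul_eq_mul, ← sum_const]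
  refine sum_congr rfl fun B hB => ?_
  have hcard : #B = k := (mem_powersetCard_univ.1 (h𝒜 hB))
  rw [extensionsIn, filter_true_of_mem, card_compl, hcard]
  intro b hb
  rw [mem_powersetCard_univ, card_insert_of_notMem (mem_compl.1 hb), hcard]

lemma sum_card_extensionsIn_le {k : ℕ} {ℬ : Finset (Finset V)}
    (hℬ : ℬ ⊆ powersetCard (k + 1) univ) (𝒜 : Finset (Finset V)) :
    ∑ B ∈ 𝒜, #(extensionsIn ℬ B) ≤ (k + 1) * #ℬ := by
  rw [sum_card_extensionsIn_eq_sum_card_erasuresIn, mul_comm]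
  refine sum_le_card_nsmul _ _ _ fun C hC => (card_erasuresIn_le _ _).trans_eq ?_
  exact mem_powersetCard_univ.1 (hℬ hC)

-- Conditionally on the signs in `B`, each `insert b B` with `b ∉ B` is heavy for at least one
-- of the two values of `x b`, independently over `b`.
lemma measureReal_card_extensionsIn_lt_le {p : Finset V → ℝ} {lam : ℝ} {k : ℕ} {B : Finset V}
    (hB : B ∈ heavySets p lam k) :
    (signMeasure V).real
        {x | ¬ (#Bᶜ : ℝ) / 4 ≤ #(extensionsIn (heavySets (rowExtend p x) lam (k + 1)) B)} ≤
      Real.exp (-#Bᶜ / 8) := by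
  obtain ⟨hcard, hlam⟩ := mem_heavySets.1 hB
  let rest (x : V → Bool) (b : V) : ℝ := ∑ c ∈ B, rad (x c) * p ((insert b B).erase c)
  let favourable (x : V → Bool) (b : V) : Bool := decide (0 ≤ p B * rest x b)
  let good (x : V → Bool) (b : V) : Bool := if b ∈ B then x b else x b == favourable x b
  have hgood : MeasurePreserving good (signMeasure V) (signMeasure V) := by
    refine measurePreserving_uniformOn_univ (bijective_beq_of_eqOn fun x y h => ?_)
    have hrest : rest x = rest y := funext fun b => sum_congr rfl fun c hc => by rw [h c hc]
    simp only [favourable, hrest]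
  have hheavy {x : V → Bool} {b : V} (hb : b ∈ Bᶜ) (hxb : good x b = true) :
      insert b B ∈ heavySets (rowExtend p x) lam (k + 1) := by
    replace hb := mem_compl.1 hb
    refine mem_heavySets.2 ⟨by rw [card_insert_of_notMem hb, hcard], hlam.trans ?_⟩
    have hx : x b = favourable x b := by simpa [good, hb] using hxb
    rw [rowExtend_insert p x hb, hx]
    exact abs_le_abs_rad_decide_mul_add (p B) (rest x b)
  have hle (x : V → Bool) :
      #{b ∈ Bᶜ | good x b = true} ≤ #(extensionsIn (heavySets (rowExtend p x) lam (k + 1)) B) :=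
    card_le_card fun b hb =>
      have h := mem_filter.1 hb
      mem_filter.2 ⟨h.1, hheavy h.1 h.2⟩
  calc _ ≤ (signMeasure V).real (good ⁻¹' {y | (#{b ∈ Bᶜ | y b = true} : ℝ) < #Bᶜ / 4}) :=
        measureReal_mono (fun x hx => (Nat.cast_le.2 (hle x)).trans_lt (not_le.1 hx))
          (measure_ne_top _ _)
    _ = (signMeasure V).real {y | (#{b ∈ Bᶜ | y b = true} : ℝ) < #Bᶜ / 4} :=
        hgood.measureReal_preimage MeasurableSet.of_discrete.nullMeasurableSet
    _ ≤ Real.exp (-#Bᶜ / 8) := measureReal_card_filter_eq_true_lt_le Bᶜ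

variable (p : Finset V → ℝ) (lam : ℝ) {k : ℕ}

lemma mul_card_le_card_heavySets_rowExtend (x : V → Bool) {r : ℝ} :
    r * #{B ∈ heavySets p lam k | r ≤ #(extensionsIn (heavySets (rowExtend p x) lam (k + 1)) B)} ≤
      (k + 1) * #(heavySets (rowExtend p x) lam (k + 1)) := by
  set H' := heavySets (rowExtend p x) lam (k + 1)
  calc r * #{B ∈ heavySets p lam k | r ≤ #(extensionsIn H' B)}
      = ∑ B ∈ heavySets p lam k with r ≤ #(extensionsIn H' B), r := by
        rw [sum_const, nsmul_eq_mul, mul_comm]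
    _ ≤ ∑ B ∈ heavySets p lam k with r ≤ #(extensionsIn H' B), (#(extensionsIn H' B) : ℝ) :=
        sum_le_sum fun B hB => (mem_filter.1 hB).2
    _ ≤ (k + 1) * #H' := mod_cast sum_card_extensionsIn_le (heavySets_subset_powersetCard _ _ _) _

theorem one_sub_exp_le_measureReal_mul_card_heavySets_le {R : ℕ} (hV : Fintype.card V = k + R) :
    1 - 2 * Real.exp (-R / 8) ≤ (signMeasure V).real
      {x | R * #(heavySets p lam k) / (8 * (k + 1)) ≤
        (#(heavySets (rowExtend p x) lam (k + 1)) : ℝ)} := by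
  have h := one_sub_div_le_measureReal_card (μ := signMeasure V) (𝒞 := heavySets p lam k)
    (w := fun _ => 1) (θ := 1 / 2) (L := 1) (ρ := Real.exp (-R / 8))
    (G := fun x B => (R : ℝ) / 4 ≤ #(extensionsIn (heavySets (rowExtend p x) lam (k + 1)) B))
    one_pos (by simp) (by simp) (fun _ _ => .of_discrete) (Real.exp_pos _).le
    (fun B hB _ => ?_) (by norm_num)
  · rw [div_div_eq_mul_div, div_one, mul_comm] at h
    refine h.trans (measureReal_mono (fun x hx => ?_) (measure_ne_top _ _))
    rw [Set.mem_ofPred_eq, sum_const, nsmul_one, div_one] at hx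
    have hcount := mul_card_le_card_heavySets_rowExtend p lam x (k := k) (r := R / 4)
    have hhalf := mul_le_mul_of_nonneg_left hx (by positivity : (0 : ℝ) ≤ R / 4)
    rw [Set.mem_ofPred_eq, div_le_iff₀ (by positivity)]
    linarith
  · have hR : #Bᶜ = R := by rw [card_compl, (mem_heavySets.1 hB).1, hV, Nat.add_sub_cancel_left]
    simpa only [hR] using measureReal_card_extensionsIn_lt_le hB

lemma one_sub_div_le_measureReal_card_heavySets_rowExtend {𝒜 𝒞 : Finset (Finset V)}
    (h𝒞 : 𝒞 ⊆ powersetCard (k + 1) univ) {L ρ θ : ℝ} (hL : 0 < L)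
    (hwL : ∀ C ∈ 𝒞, (#(erasuresIn 𝒜 C) : ℝ) ≤ L) (hρ0 : 0 ≤ ρ)
    (hρ : ∀ C ∈ 𝒞, (erasuresIn 𝒜 C).Nonempty →
      (signMeasure V).real {x | ¬ lam ≤ |rowExtend p x C|} ≤ ρ) (hθ : 0 < θ) :
    1 - ρ / θ ≤ (signMeasure V).real
      {x | (1 - θ) * (∑ C ∈ 𝒞, (#(erasuresIn 𝒜 C) : ℝ)) / L ≤
        #(heavySets (rowExtend p x) lam (k + 1))} := by
  refine (one_sub_div_le_measureReal_card (G := fun x C => lam ≤ |rowExtend p x C|) hL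
    (fun _ _ => Nat.cast_nonneg _) hwL (fun _ _ => .of_discrete) hρ0
    (fun C hC h => hρ C hC (card_ne_zero.1 (Nat.cast_ne_zero.1 h))) hθ).trans ?_
  refine measureReal_mono (fun x hx => ?_) (measure_ne_top _ _)
  exact Set.mem_ofPred.2 <| (Set.mem_ofPred.1 hx).trans <|
    Nat.cast_le.2 <| card_le_card <| filter_subset_filter _ h𝒞

/-- The number of pairs `B ⊆ C` with `#B = k`, `#C = k + 1` and `B` heavy for `p`, restricted to
those `C` which contain at most `K` heavy sets of size `k`. -/
noncomputable def sparseWeight (p : Finset V → ℝ) (lam : ℝ) (k : ℕ) (K : ℝ) : ℝ :=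
  ∑ C ∈ powersetCard (k + 1) univ with (#(erasuresIn (heavySets p lam k) C) : ℝ) ≤ K,
    (#(erasuresIn (heavySets p lam k) C) : ℝ)

/-- The number of pairs `B ⊆ C` with `#B = k`, `#C = k + 1` and `B` heavy for `p`, restricted to
those `C` which contain more than `K` heavy sets of size `k`. -/
noncomputable def denseWeight (p : Finset V → ℝ) (lam : ℝ) (k : ℕ) (K : ℝ) : ℝ :=
  ∑ C ∈ powersetCard (k + 1) univ with ¬ (#(erasuresIn (heavySets p lam k) C) : ℝ) ≤ K,
    (#(erasuresIn (heavySets p lam k) C) : ℝ)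

lemma sparseWeight_add_denseWeight {R : ℕ} (hV : Fintype.card V = k + R) (K : ℝ) :
    sparseWeight p lam k K + denseWeight p lam k K = R * #(heavySets p lam k) := by
  rw [sparseWeight, denseWeight, sum_filter_add_sum_filter_not, ← Nat.cast_sum,
    sum_card_erasuresIn_powersetCard (heavySets_subset_powersetCard p lam k), hV,
    Nat.add_sub_cancel_left, Nat.cast_mul]

variable {p lam} in
lemma le_abs_of_mem_erasuresIn {C : Finset V} {b : V}
    (hb : b ∈ erasuresIn (heavySets p lam k) C) : lam ≤ |p (C.erase b)| :=
  (mem_heavySets.1 (mem_filter.1 hb).2).2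

theorem one_third_le_measureReal_sparseWeight_div_le {K : ℝ} (hK : 0 < K) :
    1 / 3 ≤ (signMeasure V).real {x | sparseWeight p lam k K / (4 * K) ≤
      #(heavySets (rowExtend p x) lam (k + 1))} := by
  have hthird : (1 : ℝ) / 3 = 1 - 1 / 2 / (3 / 4) := by norm_num
  have hweight : sparseWeight p lam k K / (4 * K) = (1 - 3 / 4) * sparseWeight p lam k K / K := by
    ring
  rw [hthird, hweight]
  exact one_sub_div_le_measureReal_card_heavySets_rowExtend p lam (filter_subset _ _) hK
    (fun C hC => (mem_filter.1 hC).2) (by norm_num)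
    (fun C _ ⟨b, hb⟩ => measureReal_abs_sum_rad_lt_le_half (filter_subset _ _ hb)
      (le_abs_of_mem_erasuresIn hb)) (by norm_num)

theorem one_sub_div_sqrt_le_measureReal_denseWeight_div_le {K t : ℝ} (hK : 0 < K) (ht : 1 ≤ t) :
    1 - 4 * (t / √K) ≤ (signMeasure V).real {x | denseWeight p lam k K / (2 * (k + 1)) ≤
      #(heavySets (rowExtend p x) (t * lam) (k + 1))} := by
  have hprob : 1 - 4 * (t / √K) = 1 - 2 * t / √K / (1 / 2) := by ring
  have hweight : denseWeight p lam k K / (2 * (k + 1)) =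
      (1 - 1 / 2) * denseWeight p lam k K / (k + 1) := by
    field_simp
    ring
  rw [hprob, hweight]
  refine one_sub_div_le_measureReal_card_heavySets_rowExtend p (t * lam) (filter_subset _ _)
    (by positivity) (fun C hC => ?_) (by positivity) (fun C hC hne => ?_) (by norm_num)
  · have hcard := mem_powersetCard_univ.1 (mem_filter.1 hC).1
    exact_mod_cast hcard ▸ card_erasuresIn_le (heavySets p lam k) C
  · refine (measureReal_abs_sum_rad_lt_le ht (filter_subset _ _) hne fun b hb =>
      le_abs_of_mem_erasuresIn hb).trans ?_
    gcongr
    exact (not_le.1 (mem_filter.1 hC).2).le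

end SetFunctions

/-! ### The random symmetric extension -/

section Extension

/-- The permanent of the rows of `M` with (0-based) index at least `R` and the columns `B`, as a
function of `B`. -/
noncomputable def lowerPerm {s : ℕ} (R : ℕ) (M : Matrix (Fin s) (Fin s) ℝ) (B : Finset (Fin s)) :
    ℝ :=
  permOn M {i | R ≤ i.val} B

lemma ev_iff_le_card_heavySets {R k s : ℕ} {N lam : ℝ} {M : Matrix (Fin s) (Fin s) ℝ} :
    Ev R k N lam M ↔ N ≤ #(heavySets (lowerPerm R M) lam k) := by
  have h : heavySets (lowerPerm R M) lam k =
      ({B | #B = k ∧ lam ≤ |permOn M {i | R ≤ i.val} B|} : Finset _) := by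
    ext B
    simp [mem_heavySets, lowerPerm]
  rw [h, Ev]

lemma extSym_submatrix_castSucc {s : ℕ} (M : Matrix (Fin s) (Fin s) ℝ)
    (ω : Fin (s + 1) → Fin (s + 1) → Bool) :
    (extSym (s + 1) M ω).submatrix Fin.castSucc Fin.castSucc = M := by
  ext i j
  simp [extSym]

lemma extSym_last_castSucc {s : ℕ} (M : Matrix (Fin s) (Fin s) ℝ)
    (ω : Fin (s + 1) → Fin (s + 1) → Bool) (c : Fin s) :
    extSym (s + 1) M ω (Fin.last s) c.castSucc = rad (ω c.castSucc (Fin.last s)) := by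
  simp [extSym, (Fin.castSucc_lt_last c).not_ge]

lemma lowerPerm_extSym_map_castSucc {R s : ℕ} (hR : R ≤ s) (M : Matrix (Fin s) (Fin s) ℝ)
    (ω : Fin (s + 1) → Fin (s + 1) → Bool) (C : Finset (Fin s)) :
    lowerPerm R (extSym (s + 1) M ω) (C.map Fin.castSuccEmb) =
      rowExtend (lowerPerm R M) (fun c => ω c.castSucc (Fin.last s)) C := by
  have hrows : ({i | R ≤ i.val} : Finset (Fin (s + 1))) =
      insert (Fin.last s) (({i | R ≤ i.val} : Finset (Fin s)).map Fin.castSuccEmb) := by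
    ext i
    induction i using Fin.lastCases <;> simp [hR, (Fin.castSucc_lt_last _).ne]
  rw [lowerPerm, hrows, permOn_insert _ (by simp [(Fin.castSucc_lt_last _).ne]), sum_map, rowExtend]
  refine sum_congr rfl fun c _ => ?_
  rw [← map_erase, permOn_map]
  simp [extSym_submatrix_castSucc, extSym_last_castSucc, lowerPerm]

lemma card_heavySets_rowExtend_le {R s : ℕ} (hR : R ≤ s) (M : Matrix (Fin s) (Fin s) ℝ)
    (ω : Fin (s + 1) → Fin (s + 1) → Bool) (lam : ℝ) (k : ℕ) :
    #(heavySets (rowExtend (lowerPerm R M) fun c => ω c.castSucc (Fin.last s)) lam k) ≤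
      #(heavySets (lowerPerm R (extSym (s + 1) M ω)) lam k) := by
  refine card_le_card_of_injOn (·.map Fin.castSuccEmb) (fun C hC => ?_) (map_injective _).injOn
  simpa [mem_heavySets, lowerPerm_extSym_map_castSucc hR] using hC

lemma measurePreserving_column {s : ℕ} (j : Fin (s + 1)) :
    MeasurePreserving (fun (ω : Fin (s + 1) → Fin (s + 1) → Bool) (c : Fin s) => ω c.castSucc j)
      (uniformOn Set.univ) (signMeasure (Fin s)) := by
  have hcolumn : MeasurePreserving (fun (ω : Fin (s + 1) → Fin (s + 1) → Bool) c => ω c j)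
      (Measure.pi fun _ => signMeasure (Fin (s + 1))) (signMeasure (Fin (s + 1))) := by
    simp only [signMeasure_eq_pi]
    exact measurePreserving_pi _ _ fun _ => measurePreserving_eval _ j
  have hinit : MeasurePreserving (fun (x : Fin (s + 1) → Bool) (c : Fin s) => x c.castSucc)
      (signMeasure (Fin (s + 1))) (signMeasure (Fin s)) := by
    simp only [signMeasure_eq_pi, ← Fin.succAbove_last]
    exact measurePreserving_snd.comp (measurePreserving_piFinSuccAbove _ (Fin.last s))
  rw [← uniformOn_pi, Set.pi_univ] at hcolumn
  exact hinit.comp hcolumn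

lemma probExt_eq_measureReal {s n : ℕ} (M : Matrix (Fin s) (Fin s) ℝ)
    (P : Matrix (Fin n) (Fin n) ℝ → Prop) :
    probExt n M P = (uniformOn Set.univ).real {ω | P (extSym n M ω)} := by
  classical
  rw [uniformOn_univ_real, probExt]
  simp [pow_mul]

theorem le_probExt_ev {R s k : ℕ} (hR : R ≤ s) {M : Matrix (Fin s) (Fin s) ℝ} {q N N' lam : ℝ}
    (hN : N ≤ N')
    (hq : q ≤ (signMeasure (Fin s)).real
      {x | N' ≤ #(heavySets (rowExtend (lowerPerm R M) x) lam k)}) :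
    q ≤ probExt (s + 1) M (Ev R k N lam) := by
  rw [probExt_eq_measureReal]
  rw [← (measurePreserving_column (Fin.last s)).measureReal_preimage
    MeasurableSet.of_discrete.nullMeasurableSet] at hq
  refine hq.trans (measureReal_mono (fun ω hω => ?_) (measure_ne_top _ _))
  refine Set.mem_ofPred.2 <| ev_iff_le_card_heavySets.2 <| hN.trans <| hω.trans ?_
  exact_mod_cast card_heavySets_rowExtend_le hR M ω lam k

end Extension

lemma mul_div_le_mul_div_of_add_le {R n k : ℕ} (hkR : k + R ≤ n) {N H : ℝ} (hNH : N ≤ H)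
    (hH : 0 ≤ H) : R * N / (8 * n) ≤ R * H / (8 * (k + 1)) := by
  rcases R.eq_zero_or_pos with rfl | hR
  · simp
  · have hkn : (k + 1 : ℝ) ≤ n := by exact_mod_cast (by omega : k + 1 ≤ n)
    calc R * N / (8 * n) ≤ R * H / (8 * n) := by gcongr
      _ ≤ R * H / (8 * (k + 1)) := by gcongr

lemma one_half_sub_rpow_div_sqrt {K : ℝ} (hK : 0 < K) (δ : ℝ) :
    K ^ ((1 : ℝ) / 2 - δ) / √K = K ^ (-δ) := by
  rw [Real.sqrt_eq_rpow, ← Real.rpow_sub hK]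
  ring_nf

theorem grow_large_minors_general (R n k : ℕ) (hkR : k + R ≤ n) (δ K lam N : ℝ)
    (hδ : δ ≤ 1 / 2) (hK : 1 ≤ K) :
    ∃ E' E'' : Matrix (Fin (k + R)) (Fin (k + R)) ℝ → Prop,
      (∀ M, Ev R k N lam M ↔ E' M ∨ E'' M) ∧
      (∀ M, ¬(E' M ∧ E'' M)) ∧
      (∀ M : Matrix (Fin (k + R)) (Fin (k + R)) ℝ, Ev R k N lam M →
        1 - 2 * Real.exp (-(R : ℝ) / 8) ≤
          probExt (k + R + 1) M (Ev R (k + 1) (R * N / (8 * n)) lam)) ∧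
      (∀ M, E' M → 1 / 3 ≤ probExt (k + R + 1) M (Ev R (k + 1) (R * N / (8 * K)) lam)) ∧
      (∀ M, E'' M → 1 - 4 * K ^ (-δ) ≤ probExt (k + R + 1) M
        (Ev R (k + 1) (R * N / (8 * n)) (K ^ ((1 : ℝ) / 2 - δ) * lam))) := by
  have hK0 : 0 < K := one_pos.trans_le hK
  have hcard : Fintype.card (Fin (k + R)) = k + R := Fintype.card_fin _
  let H (M : Matrix (Fin (k + R)) (Fin (k + R)) ℝ) : ℝ := #(heavySets (lowerPerm R M) lam k)
  let sparse (M : Matrix (Fin (k + R)) (Fin (k + R)) ℝ) : Prop :=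
    R * H M / 2 ≤ sparseWeight (lowerPerm R M) lam k K
  have hminus {M} (hM : Ev R k N lam M) : R * N / (8 * n) ≤ R * H M / (8 * (k + 1)) :=
    mul_div_le_mul_div_of_add_le hkR (ev_iff_le_card_heavySets.1 hM) (Nat.cast_nonneg _)
  refine ⟨fun M => Ev R k N lam M ∧ sparse M, fun M => Ev R k N lam M ∧ ¬ sparse M,
    fun M => by tauto, fun M => by tauto, fun M hM => ?_, fun M ⟨hM, hs⟩ => ?_,
    fun M ⟨hM, hs⟩ => ?_⟩
  · exact le_probExt_ev (Nat.le_add_left R k) (hminus hM)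
      (one_sub_exp_le_measureReal_mul_card_heavySets_le _ _ hcard)
  · refine le_probExt_ev (Nat.le_add_left R k) ?_
      (one_third_le_measureReal_sparseWeight_div_le _ _ hK0)
    calc R * N / (8 * K) ≤ R * H M / (8 * K) := by
          gcongr
          exact ev_iff_le_card_heavySets.1 hM
      _ = R * H M / 2 / (4 * K) := by ring
      _ ≤ sparseWeight (lowerPerm R M) lam k K / (4 * K) := by gcongr
  · rw [← one_half_sub_rpow_div_sqrt hK0]
    have hsum := sparseWeight_add_denseWeight (lowerPerm R M) lam hcard K
    have hdense : R * H M / 4 ≤ denseWeight (lowerPerm R M) lam k K := by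
      linarith [not_le.1 hs, mul_nonneg R.cast_nonneg (Nat.cast_nonneg (α := ℝ) _ : 0 ≤ H M)]
    refine le_probExt_ev (Nat.le_add_left R k) ?_
      (one_sub_div_sqrt_le_measureReal_denseWeight_div_le _ _ hK0
        (Real.one_le_rpow hK (sub_nonneg.2 hδ)))
    calc R * N / (8 * n) ≤ R * H M / (8 * (k + 1)) := hminus hM
      _ = R * H M / 4 / (2 * (k + 1)) := by rw [div_div]; ring
      _ ≤ denseWeight (lowerPerm R M) lam k K / (2 * (k + 1)) := by gcongr

/-- The growth lemma for heavy submatrices: the event `E(k,N,λ)` can be partitioned into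
two events `E'` and `E''` (each determined by `M_{k+R}`) such that conditionally on any
symmetric `±1` outcome `M` of `M_{k+R}`: (1) if `E(k,N,λ)` holds then `E(k+1, N⁻, λ)`
holds for the random extension with probability at least `1 - 2e^(-R/8)`; (2) if `E'`
holds then `E(k+1, N⁺, λ)` holds with probability at least `1/3`; (3) if `E''` holds then
`E(k+1, N⁻, λ⁺)` holds with probability at least `1 - 4K^(-δ)`; where `N⁺ = RN/(8K)`,
`N⁻ = RN/(8n)` and `λ⁺ = K^(1/2-δ) λ`. -/
theorem grow_large_minors (R n k : ℕ) (hkR : k + R ≤ n)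
    (δ K lam N : ℝ) (hδ0 : 0 < δ) (hδ : δ < 1 / 2) (hK : 1 < K) (hlam : 0 < lam)
    (hN : 0 < N) :
    ∃ E' E'' : Matrix (Fin (k + R)) (Fin (k + R)) ℝ → Prop,
      (∀ M, Ev R k N lam M ↔ E' M ∨ E'' M) ∧
      (∀ M, ¬(E' M ∧ E'' M)) ∧
      (∀ M : Matrix (Fin (k + R)) (Fin (k + R)) ℝ, M.IsSymm →
        (∀ i j, M i j = 1 ∨ M i j = -1) → Ev R k N lam M →
        1 - 2 * Real.exp (-(R : ℝ) / 8) ≤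
          probExt (k + R + 1) M fun M' =>
            Ev R (k + 1) ((R : ℝ) * N / (8 * n)) lam M') ∧
      (∀ M : Matrix (Fin (k + R)) (Fin (k + R)) ℝ, M.IsSymm →
        (∀ i j, M i j = 1 ∨ M i j = -1) → E' M →
        1 / 3 ≤
          probExt (k + R + 1) M fun M' =>
            Ev R (k + 1) ((R : ℝ) * N / (8 * K)) lam M') ∧
      (∀ M : Matrix (Fin (k + R)) (Fin (k + R)) ℝ, M.IsSymm →
        (∀ i j, M i j = 1 ∨ M i j = -1) → E'' M →
        1 - 4 * K ^ (-δ) ≤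
          probExt (k + R + 1) M fun M' =>
            Ev R (k + 1) ((R : ℝ) * N / (8 * n)) (K ^ ((1 : ℝ) / 2 - δ) * lam) M') := by
  obtain ⟨E', E'', hE, hdisj, h1, h2, h3⟩ :=
    grow_large_minors_general R n k hkR δ K lam N hδ.le hK.le
  exact ⟨E', E'', hE, hdisj, fun M _ _ => h1 M, fun M _ _ => h2 M, fun M _ _ => h3 M⟩
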